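/- arXiv:1503.03111 — 2 statements merged into one kernel-verified Lean document; each statement's English description precedes it below -/
import Mathlib

section
/- Let K, L ⊆ ℝ^d be convex bodies and m a positive integer with γ_m(K) ≤ 1/2 and γ_m(L) ≤ 1/2. Let a ∈ K, b ∈ L, δ ≥ 1, and let T : ℝ^d → ℝ^d be an invertible linear map such that L − b ⊆ T(K − a) ⊆ δ·(L − b). Then m/(1 − γ_m(K)) ≥ (δ/(2δ − 1))·(m/(1 − γ_m(L))). -/
open Set Pointwise

section Defs

variable {V : Type*} [NormedAddCommGroup V] [NormedSpace ℝ V]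

/-- A convex body: compact, convex, with nonempty interior. -/
def IsConvexBody (K : Set V) : Prop :=
  IsCompact K ∧ Convex ℝ K ∧ (interior K).Nonempty

/-- `K` can be covered by `m` homothets of ratio `lam`. -/
def CoversWith (K : Set V) (lam : ℝ) (m : ℕ) : Prop :=
  ∃ t : Fin m → V, K ⊆ ⋃ i, (fun x => lam • x + t i) '' K

/-- The `m`-covering number `γ_m(K)`. -/
noncomputable def gammaC (m : ℕ) (K : Set V) : ℝ :=
  sInf {lam : ℝ | 0 < lam ∧ CoversWith K lam m}

/-- The covering index `coin(K)`. -/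
noncomputable def coin (K : Set V) : ℝ :=
  sInf {r : ℝ | ∃ m : ℕ, 0 < m ∧ gammaC m K ≤ 1 / 2 ∧ r = (m : ℝ) / (1 - gammaC m K)}

/-- The weak covering index `wcoin(K)`. -/
noncomputable def wcoin (K : Set V) : ℝ :=
  sInf {r : ℝ | ∃ m : ℕ, 0 < m ∧ gammaC m K < 1 ∧ r = (m : ℝ) / (1 - gammaC m K)}

/-- `N_λ(K)`: the least number of translates of `λ • K` needed to cover `K`. -/
noncomputable def covN (lam : ℝ) (K : Set V) : ℕ :=
  sInf {n : ℕ | CoversWith K lam n}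

/-- A convex body is tightly covered if for every `0 < λ < 1` it contains `N_λ(K)`
points no two of which lie in a common homothet `λ • K + t`. -/
def TightlyCovered (K : Set V) : Prop :=
  ∀ lam : ℝ, 0 < lam → lam < 1 →
    ∃ p : Fin (covN lam K) → V, (∀ i, p i ∈ K) ∧
      ∀ i j, i ≠ j → ∀ t : V,
        ¬(p i ∈ (fun x => lam • x + t) '' K ∧ p j ∈ (fun x => lam • x + t) '' K)

/-- The covering parameter `C(K)` of Swanepoel. -/
noncomputable def covParam (K : Set V) : ℝ :=
  sInf {r : ℝ | ∃ k : ℕ, ∃ lam : Fin k → ℝ, ∃ t : Fin k → V,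
    (∀ i, 0 < lam i ∧ lam i < 1) ∧
    (K ⊆ ⋃ i, (fun x => lam i • x + t i) '' K) ∧
    r = ∑ i, 1 / (1 - lam i)}

/-- The (multiplicative) Banach–Mazur distance. -/
noncomputable def distBM {d : ℕ} (K L : Set (Fin d → ℝ)) : ℝ :=
  sInf {δ : ℝ | 1 ≤ δ ∧ ∃ T : (Fin d → ℝ) ≃ₗ[ℝ] (Fin d → ℝ), ∃ a ∈ K, ∃ b ∈ L,
    (fun x => x - b) '' L ⊆ T '' ((fun x => x - a) '' K) ∧
    T '' ((fun x => x - a) '' K) ⊆ δ • ((fun x => x - b) '' L)}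

end Defs

/-!
A covering of `K` by homothets of ratio `lam` is carried by the sandwich to a covering of `L` by
homothets of ratio `δ * lam`, so `γ_m(L) ≤ min (1 / 2) (δ * γ_m(K))`. Under this constraint the
ratio `(1 - γ_m(K)) / (1 - γ_m(L))` is largest when `γ_m(L) = δ * γ_m(K) = 1 / 2`, where it equals
`(2 * δ - 1) / δ`.
-/

section CoveringNumber

variable {V W : Type*} [NormedAddCommGroup V] [NormedSpace ℝ V]
  [NormedAddCommGroup W] [NormedSpace ℝ W] {K A B : Set V} {lam δ : ℝ} {m : ℕ}

theorem coversWith_one (K : Set V) (hm : 0 < m) : CoversWith K 1 m :=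
  ⟨fun _ => 0, fun x hx => mem_iUnion.2 ⟨⟨0, hm⟩, x, hx, by simp⟩⟩

theorem CoversWith.image_affineMap (h : CoversWith K lam m) (f : V →ᵃ[ℝ] W) :
    CoversWith (f '' K) lam m := by
  obtain ⟨t, ht⟩ := h
  refine ⟨fun i => f (t i) - lam • f 0, ?_⟩
  rintro _ ⟨x, hx, rfl⟩
  obtain ⟨i, y, hy, rfl⟩ := mem_iUnion.1 (ht hx)
  refine mem_iUnion.2 ⟨i, f y, mem_image_of_mem f hy, ?_⟩
  have f_apply (v : V) : f v = f.linear v + f 0 := congrFun f.decomp v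
  simp only [f_apply (lam • y + t i), f_apply y, f_apply (t i), map_add, map_smul, smul_add]
  abel

theorem coversWith_image_affineEquiv_iff (e : V ≃ᵃ[ℝ] W) :
    CoversWith (e '' K) lam m ↔ CoversWith K lam m := by
  have symm_image_image : e.symm '' (e '' K) = K := e.toEquiv.symm_image_image K
  refine ⟨fun h => ?_, fun h => h.image_affineMap e.toAffineMap⟩
  rw [← symm_image_image]
  exact h.image_affineMap e.symm.toAffineMap

theorem CoversWith.of_subset_of_subset_smul (h : CoversWith B lam m) (hAB : A ⊆ B)
    (hBA : B ⊆ δ • A) : CoversWith A (δ * lam) m := by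
  obtain ⟨t, ht⟩ := h
  refine ⟨t, fun x hx => ?_⟩
  obtain ⟨i, y, hy, rfl⟩ := mem_iUnion.1 (ht (hAB hx))
  obtain ⟨z, hz, rfl⟩ := hBA hy
  exact mem_iUnion.2 ⟨i, z, hz, by simp only [smul_smul, mul_comm]⟩

theorem gammaC_le_of_coversWith (hlam : 0 < lam) (h : CoversWith K lam m) : gammaC m K ≤ lam :=
  csInf_le ⟨0, fun _ hx => hx.1.le⟩ ⟨hlam, h⟩

theorem le_gammaC {c : ℝ} (hm : 0 < m) (h : ∀ lam, 0 < lam → CoversWith K lam m → c ≤ lam) :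
    c ≤ gammaC m K :=
  le_csInf ⟨1, one_pos, coversWith_one K hm⟩ fun lam hlam => h lam hlam.1 hlam.2

theorem gammaC_image_affineMap_le (hm : 0 < m) (f : V →ᵃ[ℝ] W) :
    gammaC m (f '' K) ≤ gammaC m K :=
  le_gammaC hm fun _ hlam h => gammaC_le_of_coversWith hlam (h.image_affineMap f)

theorem gammaC_image_affineEquiv (e : V ≃ᵃ[ℝ] W) : gammaC m (e '' K) = gammaC m K := by
  simp only [gammaC, coversWith_image_affineEquiv_iff]

theorem gammaC_image_sub_const (v : V) : gammaC m ((fun x => x - v) '' K) = gammaC m K :=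
  gammaC_image_affineEquiv (AffineEquiv.vaddConst ℝ v).symm

theorem gammaC_le_mul_of_subset_of_subset_smul (hm : 0 < m) (hδ : 0 < δ) (hAB : A ⊆ B)
    (hBA : B ⊆ δ • A) : gammaC m A ≤ δ * gammaC m B := by
  rw [← div_le_iff₀' hδ]
  refine le_gammaC hm fun lam hlam h => ?_
  rw [div_le_iff₀' hδ]
  exact gammaC_le_of_coversWith (mul_pos hδ hlam) (h.of_subset_of_subset_smul hAB hBA)

theorem gammaC_le_mul_of_sandwich {L : Set W} {a : V} {b : W} (hm : 0 < m) (hδ : 0 < δ)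
    (T : V →ₗ[ℝ] W) (h1 : (fun x => x - b) '' L ⊆ T '' ((fun x => x - a) '' K))
    (h2 : T '' ((fun x => x - a) '' K) ⊆ δ • ((fun x => x - b) '' L)) :
    gammaC m L ≤ δ * gammaC m K := calc
  gammaC m L = gammaC m ((fun x => x - b) '' L) := (gammaC_image_sub_const b).symm
  _ ≤ δ * gammaC m (T '' ((fun x => x - a) '' K)) :=
    gammaC_le_mul_of_subset_of_subset_smul hm hδ h1 h2
  _ ≤ δ * gammaC m ((fun x => x - a) '' K) := by
    gcongr
    exact gammaC_image_affineMap_le hm T.toAffineMap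
  _ = δ * gammaC m K := by rw [gammaC_image_sub_const]

end CoveringNumber

theorem mul_one_sub_le_of_le_half_of_le_mul {δ x y : ℝ} (hδ : 1 ≤ δ) (hy : y ≤ 1 / 2)
    (hyx : y ≤ δ * x) : δ * (1 - x) ≤ (2 * δ - 1) * (1 - y) := by
  have hδ' : 0 ≤ 2 * δ - 1 := by linarith
  rcases le_total (1 / 2) (δ * x) with h | h
  · calc δ * (1 - x) ≤ (2 * δ - 1) * (1 - 1 / 2) := by linarith
      _ ≤ (2 * δ - 1) * (1 - y) := by gcongr
  · have h_gap : 0 ≤ (δ - 1) * (1 - 2 * (δ * x)) := mul_nonneg (by linarith) (by linarith)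
    calc δ * (1 - x) ≤ (2 * δ - 1) * (1 - δ * x) := by linear_combination h_gap
      _ ≤ (2 * δ - 1) * (1 - y) := by gcongr

theorem fm_ge_of_sandwich_general {V W : Type*} [NormedAddCommGroup V] [NormedSpace ℝ V]
    [NormedAddCommGroup W] [NormedSpace ℝ W] {K : Set V} {L : Set W} {m : ℕ} (hm : 0 < m)
    (hgK : gammaC m K < 1) (hgL : gammaC m L ≤ 1 / 2) {a : V} {b : W} {δ : ℝ} (hδ : 1 ≤ δ)
    (T : V →ₗ[ℝ] W) (h1 : (fun x => x - b) '' L ⊆ T '' ((fun x => x - a) '' K))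
    (h2 : T '' ((fun x => x - a) '' K) ⊆ δ • ((fun x => x - b) '' L)) :
    δ / (2 * δ - 1) * ((m : ℝ) / (1 - gammaC m L)) ≤ (m : ℝ) / (1 - gammaC m K) := by
  have hLK : gammaC m L ≤ δ * gammaC m K :=
    gammaC_le_mul_of_sandwich hm (by linarith) T h1 h2
  have h_cross : δ * (1 - gammaC m K) ≤ (2 * δ - 1) * (1 - gammaC m L) :=
    mul_one_sub_le_of_le_half_of_le_mul hδ hgL hLK
  have h_den : 0 < (2 * δ - 1) * (1 - gammaC m L) := mul_pos (by linarith) (by linarith)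
  rw [div_mul_div_comm, div_le_div_iff₀ h_den (by linarith)]
  calc δ * m * (1 - gammaC m K) = m * (δ * (1 - gammaC m K)) := by ring
    _ ≤ m * ((2 * δ - 1) * (1 - gammaC m L)) := by gcongr

/-- `f_m(K) ≥ (δ/(2δ−1)) f_m(L)` under a Banach–Mazur sandwich. -/
theorem fm_ge_of_sandwich (d : ℕ) (K L : Set (Fin d → ℝ))
    (hK : IsConvexBody K) (hL : IsConvexBody L)
    (m : ℕ) (hm : 0 < m)
    (hgK : gammaC m K ≤ 1 / 2) (hgL : gammaC m L ≤ 1 / 2)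
    (a : Fin d → ℝ) (ha : a ∈ K) (b : Fin d → ℝ) (hb : b ∈ L)
    (δ : ℝ) (hδ : 1 ≤ δ) (T : (Fin d → ℝ) ≃ₗ[ℝ] (Fin d → ℝ))
    (h1 : (fun x => x - b) '' L ⊆ T '' ((fun x => x - a) '' K))
    (h2 : T '' ((fun x => x - a) '' K) ⊆ δ • ((fun x => x - b) '' L)) :
    δ / (2 * δ - 1) * ((m : ℝ) / (1 - gammaC m L)) ≤ (m : ℝ) / (1 - gammaC m K) :=
  fm_ge_of_sandwich_general hm (by linarith) hgL hδ T.toLinearMap h1 h2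
end

section
/- For every convex body K ⊆ ℝ^d, the infimum defining the covering index is attained: there exists a positive integer m with 2^d ≤ m, γ_m(K) ≤ 1/2 and coin(K) = m/(1 − γ_m(K)). -/
open Set Pointwise

/-!
If `m` homothets of ratio `r` cover `K` in dimension `d`, comparing volumes gives `1 ≤ m * r ^ d`,
and by continuity `1 ≤ m * γ_m(K) ^ d`; hence `γ_m(K) ≤ 1 / 2` forces `2 ^ d ≤ m`. By compactness
some `m` satisfies `γ_m(K) ≤ 1 / 2`, and since `m ≤ m / (1 - γ_m(K))` for all such `m`, only
finitely many of them compete for the infimum.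
-/

open Filter MeasureTheory Module

lemma finiteDimensional_of_isCompact_of_nonempty_interior (𝕜 : Type*) {E : Type*}
    [NontriviallyNormedField 𝕜] [CompleteSpace 𝕜] [AddCommGroup E] [TopologicalSpace E]
    [IsTopologicalAddGroup E] [T2Space E] [Module 𝕜 E] [ContinuousSMul 𝕜 E] {K : Set E}
    (hK : IsCompact K) (hint : (interior K).Nonempty) : FiniteDimensional 𝕜 E := by
  obtain ⟨x, hx⟩ := hint
  have : LocallyCompactSpace E :=
    hK.locallyCompactSpace_of_mem_nhds_of_addGroup (mem_interior_iff_mem_nhds.1 hx)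
  exact .of_locallyCompactSpace 𝕜

variable {V : Type*} [NormedAddCommGroup V] [NormedSpace ℝ V] {K : Set V} {lam : ℝ} {m : ℕ}

section Measure

variable [FiniteDimensional ℝ V] [MeasurableSpace V] [BorelSpace V]
  (μ : Measure V) [μ.IsAddHaarMeasure]

lemma addHaar_image_smul_add (r : ℝ) (t : V) (s : Set V) :
    μ ((fun x => r • x + t) '' s) = ENNReal.ofReal |r ^ finrank ℝ V| * μ s := by
  rw [← image_image (· + t) (r • ·) s, image_smul, image_add_right, measure_preimage_add_right,
    Measure.addHaar_smul]

lemma CoversWith.addHaar_le (h : CoversWith K lam m) :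
    μ K ≤ m * (ENNReal.ofReal |lam ^ finrank ℝ V| * μ K) := by
  obtain ⟨t, ht⟩ := h
  calc μ K ≤ μ (⋃ i, (fun x => lam • x + t i) '' K) := measure_mono ht
    _ ≤ ∑ i, μ ((fun x => lam • x + t i) '' K) := measure_iUnion_fintype_le _ _
    _ = m * (ENNReal.ofReal |lam ^ finrank ℝ V| * μ K) := by
      simp only [addHaar_image_smul_add, Finset.sum_const, Finset.card_univ, Fintype.card_fin,
        nsmul_eq_mul]

end Measure

namespace CoversWith

lemma one_le_mul_pow_finrank (h : CoversWith K lam m) (hK : IsCompact K)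
    (hint : (interior K).Nonempty) (hlam : 0 ≤ lam) : 1 ≤ m * lam ^ finrank ℝ V := by
  have := finiteDimensional_of_isCompact_of_nonempty_interior ℝ hK hint
  borelize V
  let μ : Measure V := Measure.addHaar
  have hpos : μ K ≠ 0 := (Measure.measure_pos_of_nonempty_interior μ hint).ne'
  have hle : 1 * μ K ≤ ENNReal.ofReal (m * lam ^ finrank ℝ V) * μ K := by
    simpa [ENNReal.ofReal_mul, abs_of_nonneg hlam, mul_assoc] using h.addHaar_le μ
  exact ENNReal.one_le_ofReal.1 <|
    (ENNReal.mul_le_mul_iff_left hpos hK.measure_lt_top.ne).1 hle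

lemma pos (h : CoversWith K lam m) (hK : K.Nonempty) : 0 < m := by
  obtain ⟨t, ht⟩ := h
  obtain ⟨x, hx⟩ := hK
  obtain ⟨i, -⟩ := mem_iUnion.1 (ht hx)
  exact i.pos

lemma one (K : Set V) (hm : 0 < m) : CoversWith K 1 m :=
  ⟨0, fun x hx => mem_iUnion.2 ⟨⟨0, hm⟩, x, hx, by simp⟩⟩

end CoversWith

lemma exists_coversWith_of_isCompact (hK : IsCompact K) (hint : (interior K).Nonempty)
    (hlam : lam ≠ 0) : ∃ m, CoversWith K lam m := by
  have hint' : (interior (lam • K)).Nonempty := by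
    rw [interior_smul₀ hlam]
    exact hint.smul_set
  obtain ⟨s, hs⟩ := compact_covered_by_add_left_translates hK hint'
  refine ⟨s.card, fun i => -(s.equivFin.symm i : V), fun y hy => ?_⟩
  obtain ⟨g, hg, x, hx, hxy⟩ := mem_iUnion₂.1 (hs hy)
  have hxy : lam • x = g + y := hxy
  exact mem_iUnion.2 ⟨s.equivFin ⟨g, hg⟩, x, hx, by simp [hxy]⟩

lemma gammaC_nonneg (m : ℕ) (K : Set V) : 0 ≤ gammaC m K :=
  Real.sInf_nonneg fun _ h => h.1.le

lemma CoversWith.gammaC_le (h : CoversWith K lam m) (hlam : 0 < lam) : gammaC m K ≤ lam :=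
  csInf_le ⟨0, fun _ h => h.1.le⟩ ⟨hlam, h⟩

lemma one_le_mul_gammaC_pow_finrank (hK : IsCompact K) (hint : (interior K).Nonempty)
    (hm : 0 < m) : 1 ≤ m * gammaC m K ^ finrank ℝ V := by
  have hclosed : IsClosed {lam : ℝ | 1 ≤ m * lam ^ finrank ℝ V} :=
    isClosed_le continuous_const (by fun_prop)
  exact closure_minimal (fun lam h => h.2.one_le_mul_pow_finrank hK hint h.1.le) hclosed
    (csInf_mem_closure ⟨1, one_pos, .one K hm⟩ ⟨0, fun _ h => h.1.le⟩)

lemma two_pow_finrank_le_of_gammaC_le_half (hK : IsCompact K) (hint : (interior K).Nonempty)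
    (hm : 0 < m) (hγ : gammaC m K ≤ 1 / 2) : 2 ^ finrank ℝ V ≤ m := by
  have h : (1 : ℝ) ≤ m / 2 ^ finrank ℝ V :=
    calc (1 : ℝ) ≤ m * gammaC m K ^ finrank ℝ V := one_le_mul_gammaC_pow_finrank hK hint hm
      _ ≤ m * (1 / 2) ^ finrank ℝ V := by gcongr; exact gammaC_nonneg m K
      _ = m / 2 ^ finrank ℝ V := by rw [one_div, inv_pow, div_eq_mul_inv]
  exact_mod_cast (one_le_div₀ (by positivity)).1 h

lemma natCast_le_div_one_sub_gammaC (hγ : gammaC m K < 1) : (m : ℝ) ≤ m / (1 - gammaC m K) :=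
  le_div_self m.cast_nonneg (sub_pos.2 hγ) (sub_le_self 1 (gammaC_nonneg m K))

lemma exists_coin_eq (h : ∃ m, 0 < m ∧ gammaC m K ≤ 1 / 2) :
    ∃ m : ℕ, 0 < m ∧ gammaC m K ≤ 1 / 2 ∧ coin K = m / (1 - gammaC m K) := by
  let S : Set ℕ := {m | 0 < m ∧ gammaC m K ≤ 1 / 2}
  have : Nonempty S := nonempty_subtype.2 h
  have hcast : Tendsto (fun m : S => (m : ℝ)) cofinite atTop :=
    tendsto_natCast_atTop_atTop.comp
      (Nat.cofinite_eq_atTop ▸ Subtype.val_injective.tendsto_cofinite)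
  have hquot : Tendsto (fun m : S => (m : ℝ) / (1 - gammaC m K)) cofinite atTop :=
    tendsto_atTop_mono
      (fun m => natCast_le_div_one_sub_gammaC (m.2.2.trans_lt one_half_lt_one)) hcast
  obtain ⟨⟨m, hm, hγ⟩, hmin⟩ := hquot.exists_forall_le
  refine ⟨m, hm, hγ, IsLeast.csInf_eq ⟨⟨m, hm, hγ, rfl⟩, ?_⟩⟩
  rintro _ ⟨n, hn, hγn, rfl⟩
  exact hmin ⟨n, hn, hγn⟩

theorem coin_attained_general (hK : IsCompact K) (hint : (interior K).Nonempty) :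
    ∃ m : ℕ, 2 ^ finrank ℝ V ≤ m ∧ gammaC m K ≤ 1 / 2 ∧ coin K = m / (1 - gammaC m K) := by
  obtain ⟨n, hn⟩ := exists_coversWith_of_isCompact hK hint (one_half_pos (α := ℝ)).ne'
  obtain ⟨m, hm, hγ, hcoin⟩ := exists_coin_eq
    ⟨n, hn.pos (hint.mono interior_subset), hn.gammaC_le one_half_pos⟩
  exact ⟨m, two_pow_finrank_le_of_gammaC_le_half hK hint hm hγ, hγ, hcoin⟩

/-- the infimum defining the covering index is attained by some
`m ≥ 2^d`. -/
theorem coin_attained (d : ℕ) (K : Set (Fin d → ℝ)) (hK : IsConvexBody K) :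
    ∃ m : ℕ, 2 ^ d ≤ m ∧ gammaC m K ≤ 1 / 2 ∧
      coin K = (m : ℝ) / (1 - gammaC m K) := by
  simpa only [finrank_fin_fun] using coin_attained_general hK.1 hK.2.2
end
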